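/- Suppose p ≤ p̄_c with Ω p̄_c ≤ 2, and suppose T_p^{(ℓ,2)} ≤ K_{ℓ,2} Ω^{-ℓ/2}. Then for ℓ ≥ 4, Σ_{x ≠ 0} Π^{(0,ℓ)}_p(x) ≤ (ℓ-1) 2^ℓ K_{ℓ,2} Ω^{-ℓ/2}, where Π^{(0,ℓ)}_p(x) is the probability of an occupied cycle of length ≥ ℓ through 0 and x. -/

import Mathlib

open MeasureTheory ProbabilityTheory ENNReal

/-- `e` is an edge of the transitive (Cayley) graph on the additive group `V`
with neighbour set `S`. -/
def IsEdge {V : Type*} [AddCommGroup V] (S : Finset V) (e : Sym2 V) : Prop :=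
  ∃ x y : V, e = s(x, y) ∧ y - x ∈ S

/-- The event that `x` is connected to `y` by an occupied self-avoiding path of
length at least `i`. -/
def ConnGE {V : Type*} [AddCommGroup V] {Ωs : Type*} (S : Finset V)
    (occ : Sym2 V → Set Ωs) (i : ℕ) (x y : V) : Set Ωs :=
  {ω | ∃ k, i ≤ k ∧ ∃ w : Fin (k + 1) → V, Function.Injective w ∧
    w 0 = x ∧ w (Fin.last k) = y ∧
    ∀ m : Fin k, w m.succ - w m.castSucc ∈ S ∧ ω ∈ occ s(w m.castSucc, w m.succ)}

/-- The event that `x` is connected to `y` by an occupied path. -/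
def Conn {V : Type*} [AddCommGroup V] {Ωs : Type*} (S : Finset V)
    (occ : Sym2 V → Set Ωs) : V → V → Set Ωs :=
  ConnGE S occ 0

/-- The event that there is an occupied cycle of length at least `ℓ` containing both
`0` and `x`. -/
def CycleGE {V : Type*} [AddCommGroup V] {Ωs : Type*} (S : Finset V)
    (occ : Sym2 V → Set Ωs) (ℓ : ℕ) (x : V) : Set Ωs :=
  {ω | ∃ k, ℓ ≤ k ∧ ∃ w : ZMod k → V, Function.Injective w ∧ w 0 = 0 ∧
    (∃ m, w m = x) ∧ ∀ m, w (m + 1) - w m ∈ S ∧ ω ∈ occ s(w m, w (m + 1))}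

/-- Convolution over the vertex group. -/
noncomputable def pconv {V : Type*} [AddCommGroup V] (f g : V → ℝ≥0∞) (x : V) : ℝ≥0∞ :=
  ∑' y, f y * g (x - y)

/-- The single-step distribution `D(y) = 1/Ω` for `y` a neighbour of `0`. -/
noncomputable def DStep {V : Type*} [AddCommGroup V] [DecidableEq V] (S : Finset V)
    (y : V) : ℝ≥0∞ :=
  if y ∈ S then (S.card : ℝ≥0∞)⁻¹ else 0

/-- `i`-fold convolution with `D`: `convIter D i f = D^{*i} * f`. -/
noncomputable def convIter {V : Type*} [AddCommGroup V] (D : V → ℝ≥0∞) :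
    ℕ → (V → ℝ≥0∞) → V → ℝ≥0∞
  | 0, f => f
  | i + 1, f => pconv D (convIter D i f)

/-!
A cycle of length at least `ℓ` through `0` and `x ≠ 0` splits at these two vertices into
edge-disjoint self-avoiding walks of lengths at least `j` and `ℓ - j`, for some `1 ≤ j < ℓ`. By the
van den Berg–Kesten inequality its probability is thus at most `∑ j, τ^(j)(x) τ^(ℓ-j)(-x)`, where
`τ^(i)(x)` is the probability of a connection of length at least `i`. The first step of such a
connection is disjoint from the rest, so the same inequality also gives `τ^(i+1) ≤ pΩ D * τ^(i)`,
hence `τ^(i) ≤ (pΩ)^i D^{*i} * τ`. Summing `τ^(j)(x) τ^(ℓ-j)(-x)` over `x` yields a convolution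
at `0`, which is at most `(pΩ)^ℓ (D^{*ℓ} * τ * τ)(0)` for each of the `ℓ - 1` values of `j`.

The van den Berg–Kesten inequality is proved on finitely many edges by resampling them one by one,
and extends to countably many witnessing edge sets by monotone approximation.
-/

theorem monotone_indicator_one_of_isUpperSet {α M : Type*} [Preorder α] [Zero M] [One M]
    [Preorder M] [ZeroLEOneClass M] {s : Set α} (hs : IsUpperSet s) :
    Monotone (s.indicator (1 : α → M)) := by
  intro a b hab
  by_cases ha : a ∈ s
  · rw [Set.indicator_of_mem ha, Set.indicator_of_mem (hs hab ha), Pi.one_apply, Pi.one_apply]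
  · rw [Set.indicator_of_notMem ha]
    exact Set.indicator_apply_nonneg fun _ => zero_le_one

section BernoulliExp

variable {E : Type*} [DecidableEq E]

/-- The expectation of `f` over a random subset of `A` which contains each `e ∈ A`
independently with probability `r e`. -/
noncomputable def bernoulliExp (r : E → ℝ) (A : Finset E) (f : Finset E → ℝ) : ℝ :=
  ∑ s ∈ A.powerset, (∏ e ∈ A, if e ∈ s then r e else 1 - r e) * f s

variable {r : E → ℝ} {A : Finset E} {f g : Finset E → ℝ}

theorem bernoulliExp_insert {e : E} (he : e ∉ A) :
    bernoulliExp r (insert e A) f =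
      (1 - r e) * bernoulliExp r A f + r e * bernoulliExp r A fun s => f (insert e s) := by
  unfold bernoulliExp
  rw [Finset.sum_powerset_insert he, Finset.mul_sum, Finset.mul_sum]
  congr 1 <;> refine Finset.sum_congr rfl fun s hs => ?_
  · have hes : e ∉ s := fun h => he (Finset.mem_powerset.1 hs h)
    rw [Finset.prod_insert he, if_neg hes, mul_assoc]
  · have hprod : (∏ x ∈ A, if x ∈ insert e s then r x else 1 - r x) =
        ∏ x ∈ A, if x ∈ s then r x else 1 - r x :=
      Finset.prod_congr rfl fun x hx => by simp [ne_of_mem_of_not_mem hx he]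
    rw [Finset.prod_insert he, if_pos (Finset.mem_insert_self e s), hprod, mul_assoc]

theorem bernoulliExp_mono (h0 : ∀ e, 0 ≤ r e) (h1 : ∀ e, r e ≤ 1) (hfg : ∀ s ⊆ A, f s ≤ g s) :
    bernoulliExp r A f ≤ bernoulliExp r A g := by
  refine Finset.sum_le_sum fun s hs =>
    mul_le_mul_of_nonneg_left (hfg s (Finset.mem_powerset.1 hs)) (Finset.prod_nonneg fun e _ => ?_)
  split_ifs
  exacts [h0 e, sub_nonneg.2 (h1 e)]

theorem bernoulliExp_add :
    bernoulliExp r A (fun s => f s + g s) = bernoulliExp r A f + bernoulliExp r A g := by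
  simp only [bernoulliExp, mul_add, Finset.sum_add_distrib]

theorem bernoulliExp_const_mul (c : ℝ) :
    bernoulliExp r A (fun s => c * f s) = c * bernoulliExp r A f := by
  simp only [bernoulliExp, Finset.mul_sum, mul_left_comm]

theorem bernoulliExp_mul_const (c : ℝ) :
    bernoulliExp r A (fun s => f s * c) = bernoulliExp r A f * c := by
  simp only [mul_comm _ c, bernoulliExp_const_mul]

/-- The value of `F` at `(s, t)` once the single available copy of `e` has been added to `s` or
to `t`, whichever is better. -/
def insertEither (F : Finset E → Finset E → ℝ) (e : E) (s t : Finset E) : ℝ :=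
  max (F (insert e s) t) (F s (insert e t))

variable {F : Finset E → Finset E → ℝ}

theorem monotone_insertEither_left (hF : Monotone F) (e : E) : Monotone (insertEither F e) :=
  fun _ _ h t => max_le_max (hF (Finset.insert_subset_insert e h) t) (hF h _)

theorem monotone_insertEither_right (hF : ∀ s, Monotone (F s)) (e : E) (s : Finset E) :
    Monotone (insertEither F e s) :=
  fun _ _ h => max_le_max (hF _ h) (hF s (Finset.insert_subset_insert e h))

theorem le_insertEither_erase (hF : ∀ s, Monotone (F s)) (e : E) (u s : Finset E) :
    F s (insert e u \ s) ≤ insertEither F e (s.erase e) (u \ s.erase e) := by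
  by_cases hes : e ∈ s
  · refine le_max_of_le_left ?_
    rw [Finset.insert_erase hes]
    exact hF s (by grind)
  · refine le_max_of_le_right ?_
    rw [Finset.erase_eq_of_notMem hes]
    exact hF s (by grind)

theorem insertEither_average_le (hF : Monotone F) (hF' : ∀ s, Monotone (F s)) (e : E)
    {q : ℝ} (h0 : 0 ≤ q) (h1 : q ≤ 1) (s t : Finset E) :
    (1 - q) * F s t + q * insertEither F e s t ≤
      (1 - q) * ((1 - q) * F s t + q * F s (insert e t)) +
        q * ((1 - q) * F (insert e s) t + q * F (insert e s) (insert e t)) := by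
  have hs := Finset.subset_insert e s
  have ht := Finset.subset_insert e t
  have hsum : insertEither F e s t + F s t ≤ F (insert e s) t + F s (insert e t) := by
    rw [insertEither, ← max_add_min (F (insert e s) t)]
    gcongr
    exact le_min (hF hs t) (hF' s ht)
  have hboth : insertEither F e s t ≤ F (insert e s) (insert e t) :=
    max_le (hF' _ ht) (hF hs _)
  linear_combination q * (1 - q) * hsum + q ^ 2 * hboth

-- Elements are resampled for the second argument of `F` one at a time. Before, only one of the two
-- arguments can use `e`; afterwards each has its own copy, which only increases the expectation.
theorem bernoulliExp_le_of_split (h0 : ∀ e, 0 ≤ r e) (h1 : ∀ e, r e ≤ 1)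
    (hF : Monotone F) (hF' : ∀ s, Monotone (F s))
    (hf : ∀ u ⊆ A, ∃ s ⊆ u, f u ≤ F s (u \ s)) :
    bernoulliExp r A f ≤ bernoulliExp r A fun s => bernoulliExp r A (F s) := by
  induction A using Finset.induction_on generalizing f F with
  | empty => simpa [bernoulliExp] using hf ∅ subset_rfl
  | insert e A he ih =>
    have hwithout : bernoulliExp r A f ≤ bernoulliExp r A fun s => bernoulliExp r A (F s) :=
      ih hF hF' fun u hu => hf u (hu.trans (Finset.subset_insert e A))
    have hwith : bernoulliExp r A (fun u => f (insert e u)) ≤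
        bernoulliExp r A fun s => bernoulliExp r A (insertEither F e s) := by
      refine ih (monotone_insertEither_left hF e) (monotone_insertEither_right hF' e)
        fun u hu => ?_
      obtain ⟨s, hs, hfs⟩ := hf (insert e u) (Finset.insert_subset_insert e hu)
      exact ⟨s.erase e, Finset.subset_insert_iff.1 hs,
        hfs.trans (le_insertEither_erase hF' e u s)⟩
    have hq : 0 ≤ 1 - r e := sub_nonneg.2 (h1 e)
    calc bernoulliExp r (insert e A) f
        = (1 - r e) * bernoulliExp r A f + r e * bernoulliExp r A fun u => f (insert e u) :=
          bernoulliExp_insert he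
      _ ≤ (1 - r e) * (bernoulliExp r A fun s => bernoulliExp r A (F s)) +
            r e * bernoulliExp r A fun s => bernoulliExp r A (insertEither F e s) := by
          gcongr
          exact h0 e
      _ = bernoulliExp r A fun s => bernoulliExp r A fun t =>
            (1 - r e) * F s t + r e * insertEither F e s t := by
          simp only [bernoulliExp_add, bernoulliExp_const_mul]
      _ ≤ bernoulliExp r A fun s => bernoulliExp r A fun t =>
            (1 - r e) * ((1 - r e) * F s t + r e * F s (insert e t)) +
              r e * ((1 - r e) * F (insert e s) t + r e * F (insert e s) (insert e t)) :=
          bernoulliExp_mono h0 h1 fun s _ => bernoulliExp_mono h0 h1 fun t _ =>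
            insertEither_average_le hF hF' e (h0 e) (h1 e) s t
      _ = bernoulliExp r (insert e A) fun s => bernoulliExp r (insert e A) (F s) := by
          simp only [bernoulliExp_insert he, bernoulliExp_add, bernoulliExp_const_mul]

/-- The sets that split into disjoint members of `𝒜` and `ℬ`. If an event says that all elements
of some `a ∈ 𝒜` are present, and another one the same for `ℬ`, then this family describes their
disjoint occurrence, written `□` in the van den Berg–Kesten inequality. -/
def disjointUnions (𝒜 ℬ : Set (Finset E)) : Set (Finset E) :=
  {c | ∃ a ∈ 𝒜, ∃ b ∈ ℬ, Disjoint a b ∧ a ∪ b = c}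

theorem countable_disjointUnions {𝒜 ℬ : Set (Finset E)} (h𝒜 : 𝒜.Countable) (hℬ : ℬ.Countable) :
    (disjointUnions 𝒜 ℬ).Countable := by
  refine (h𝒜.image2 hℬ (· ∪ ·)).mono ?_
  rintro _ ⟨a, ha, b, hb, -, rfl⟩
  exact ⟨a, ha, b, hb, rfl⟩

/-- The **van den Berg–Kesten inequality** on a finite set. -/
theorem bernoulliExp_upperClosure_disjointUnions_le (h0 : ∀ e, 0 ≤ r e) (h1 : ∀ e, r e ≤ 1)
    (𝒜 ℬ : Set (Finset E)) :
    bernoulliExp r A ((upperClosure (disjointUnions 𝒜 ℬ) : Set (Finset E)).indicator 1) ≤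
      bernoulliExp r A ((upperClosure 𝒜 : Set (Finset E)).indicator 1) *
        bernoulliExp r A ((upperClosure ℬ : Set (Finset E)).indicator 1) := by
  set g : Finset E → ℝ := (upperClosure 𝒜 : Set (Finset E)).indicator 1
  set h : Finset E → ℝ := (upperClosure ℬ : Set (Finset E)).indicator 1
  have hg : 0 ≤ g := Set.indicator_nonneg fun _ _ => zero_le_one
  have hh : 0 ≤ h := Set.indicator_nonneg fun _ _ => zero_le_one
  have hgmono : Monotone g := monotone_indicator_one_of_isUpperSet (upperClosure 𝒜).upper
  have hhmono : Monotone h := monotone_indicator_one_of_isUpperSet (upperClosure ℬ).upper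
  have hsplit : ∀ u ⊆ A, ∃ s ⊆ u,
      (upperClosure (disjointUnions 𝒜 ℬ) : Set (Finset E)).indicator 1 u ≤ g s * h (u \ s) := by
    intro u _
    by_cases hu : u ∈ upperClosure (disjointUnions 𝒜 ℬ)
    · obtain ⟨_, ⟨a, ha, b, hb, hab, rfl⟩, hle⟩ := hu
      refine ⟨a, Finset.union_subset_left hle, ?_⟩
      have hbu : b ⊆ u \ a := Finset.subset_sdiff.2 ⟨Finset.union_subset_right hle, hab.symm⟩
      have hga : g a = 1 := Set.indicator_of_mem (subset_upperClosure ha) 1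
      have hhb : h (u \ a) = 1 := Set.indicator_of_mem (mem_upperClosure.2 ⟨b, hb, hbu⟩) 1
      rw [hga, hhb, mul_one]
      exact Set.indicator_le_self' (fun _ _ => zero_le_one) u
    · rw [Set.indicator_of_notMem hu]
      exact ⟨∅, u.empty_subset, mul_nonneg (hg _) (hh _)⟩
  calc _ ≤ bernoulliExp r A fun s => bernoulliExp r A fun t => g s * h t :=
        bernoulliExp_le_of_split h0 h1
          (fun _ _ hs t => mul_le_mul_of_nonneg_right (hgmono hs) (hh t))
          (fun s _ _ ht => mul_le_mul_of_nonneg_left (hhmono ht) (hg s)) hsplit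
    _ = bernoulliExp r A g * bernoulliExp r A h := by
        simp only [bernoulliExp_const_mul, bernoulliExp_mul_const]

end BernoulliExp

section Occupied

variable {E Ωs : Type*} {o : E → Set Ωs}

open Classical in
/-- The random set of elements of `A` that are occupied, the event `o e` standing for the
occupation of `e`. -/
noncomputable def occupiedIn (o : E → Set Ωs) (A : Finset E) (ω : Ωs) : Finset E :=
  {e ∈ A | ω ∈ o e}

/-- The event that all elements of some member of `𝒜` are occupied. The increasing events of
percolation are of this form. -/
def someOccupied (o : E → Set Ωs) (𝒜 : Set (Finset E)) : Set Ωs :=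
  {ω | ∃ a ∈ 𝒜, ∀ e ∈ a, ω ∈ o e}

theorem someOccupied_mono {𝒜 ℬ : Set (Finset E)} (h : 𝒜 ⊆ ℬ) :
    someOccupied o 𝒜 ⊆ someOccupied o ℬ :=
  fun _ ⟨a, ha, hω⟩ => ⟨a, h ha, hω⟩

theorem someOccupied_singleton_singleton (e : E) : someOccupied o {{e}} = o e := by
  simp [someOccupied]

theorem someOccupied_iUnion {ι : Type*} (𝒜 : ι → Set (Finset E)) :
    someOccupied o (⋃ i, 𝒜 i) = ⋃ i, someOccupied o (𝒜 i) := by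
  ext ω
  simp only [someOccupied, Set.mem_iUnion, Set.mem_ofPred_eq]
  grind

theorem occupiedIn_mem_upperClosure {A : Finset E} {𝒜 : Set (Finset E)} {ω : Ωs} :
    occupiedIn o A ω ∈ upperClosure 𝒜 ↔ ω ∈ someOccupied o {a ∈ 𝒜 | a ⊆ A} := by
  simp only [mem_upperClosure, someOccupied, occupiedIn, Set.mem_ofPred_eq,
    Finset.subset_iff, Finset.mem_filter, and_assoc, forall_and]

theorem preimage_occupiedIn_singleton [DecidableEq E] {A s : Finset E} (hs : s ⊆ A) :
    occupiedIn o A ⁻¹' {s} = ⋂ e ∈ A, if e ∈ s then o e else (o e)ᶜ := by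
  ext ω
  simp only [Set.mem_preimage, Set.mem_singleton_iff, occupiedIn, Finset.ext_iff,
    Finset.mem_filter, Set.mem_iInter]
  refine forall_congr' fun e => ?_
  by_cases hes : e ∈ s
  · simp [hes, hs hes]
  · by_cases heA : e ∈ A <;> simp [hes, heA]

variable [MeasurableSpace Ωs] {P : Measure Ωs}

theorem measure_someOccupied_eq_iSup {𝒜 : Set (Finset E)} (h𝒜 : 𝒜.Countable) :
    P (someOccupied o 𝒜) = ⨆ A, P {ω | occupiedIn o A ω ∈ upperClosure 𝒜} := by
  classical
  simp only [occupiedIn_mem_upperClosure, Set.ofPred_mem_eq]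
  refine le_antisymm ?_ (iSup_le fun A => measure_mono (someOccupied_mono fun a ha => ha.1))
  have : Countable 𝒜 := h𝒜
  have hdir : Directed (· ⊆ ·) fun F : Finset 𝒜 => someOccupied o (Subtype.val '' (F : Set 𝒜)) :=
    Monotone.directed_le fun F G h => someOccupied_mono (Set.image_mono h)
  have hunion : someOccupied o 𝒜 = ⋃ F : Finset 𝒜, someOccupied o (Subtype.val '' (F : Set 𝒜)) := by
    rw [← someOccupied_iUnion, ← Set.image_iUnion,
      Set.iUnion_eq_univ_iff.2 fun a => ⟨{a}, by simp⟩, Set.image_univ, Subtype.range_coe]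
  rw [hunion, hdir.measure_iUnion]
  refine iSup_mono' fun F => ⟨F.biUnion Subtype.val, measure_mono (someOccupied_mono ?_)⟩
  rintro _ ⟨a, ha, rfl⟩
  exact ⟨a.2, Finset.subset_biUnion_of_mem Subtype.val ha⟩

variable [IsProbabilityMeasure P]

theorem measureReal_occupiedIn_eq [DecidableEq E] (hm : ∀ e, MeasurableSet (o e))
    (hind : iIndepSet o P) {A s : Finset E} (hs : s ⊆ A) :
    P.real (occupiedIn o A ⁻¹' {s}) =
      ∏ e ∈ A, if e ∈ s then P.real (o e) else 1 - P.real (o e) := by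
  have hgen : ∀ e, MeasurableSet[.generateFrom {o e}] (o e) := fun e =>
    MeasurableSpace.measurableSet_generateFrom rfl
  rw [preimage_occupiedIn_singleton hs, measureReal_def, (iIndepSet_iff o P).1 hind A,
    ENNReal.toReal_prod]
  · refine Finset.prod_congr rfl fun e _ => ?_
    split_ifs
    exacts [rfl, probReal_compl_eq_one_sub (hm e)]
  · intro e _
    split_ifs
    exacts [hgen e, (hgen e).compl]

theorem measureReal_occupiedIn_mem [DecidableEq E] (hm : ∀ e, MeasurableSet (o e))
    (hind : iIndepSet o P) (A : Finset E) (𝒰 : Set (Finset E)) :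
    P.real {ω | occupiedIn o A ω ∈ 𝒰} =
      bernoulliExp (fun e => P.real (o e)) A (𝒰.indicator 1) := by
  classical
  have hpre : {ω | occupiedIn o A ω ∈ 𝒰} = occupiedIn o A ⁻¹' ↑(A.powerset.filter (· ∈ 𝒰)) := by
    ext ω
    simp [occupiedIn]
  rw [hpre, ← sum_measureReal_preimage_singleton, Finset.sum_filter]
  · refine Finset.sum_congr rfl fun s hs => ?_
    rw [measureReal_occupiedIn_eq hm hind (Finset.mem_powerset.1 hs)]
    simp [Set.indicator_apply]
  · intro s hs
    rw [preimage_occupiedIn_singleton (Finset.mem_powerset.1 (Finset.mem_filter.1 hs).1)]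
    exact A.measurableSet_biInter fun e _ => by
      split_ifs
      exacts [hm e, (hm e).compl]

/-- The **van den Berg–Kesten inequality** for increasing events. -/
theorem measure_someOccupied_disjointUnions_le [DecidableEq E]
    (hm : ∀ e, MeasurableSet (o e)) (hind : iIndepSet o P) {𝒜 ℬ : Set (Finset E)}
    (h𝒜 : 𝒜.Countable) (hℬ : ℬ.Countable) :
    P (someOccupied o (disjointUnions 𝒜 ℬ)) ≤ P (someOccupied o 𝒜) * P (someOccupied o ℬ) := by
  rw [measure_someOccupied_eq_iSup (countable_disjointUnions h𝒜 hℬ),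
    measure_someOccupied_eq_iSup h𝒜, measure_someOccupied_eq_iSup hℬ]
  refine iSup_le fun A => le_trans ?_ (mul_le_mul' (le_iSup _ A) (le_iSup _ A))
  rw [← ENNReal.toReal_le_toReal (by finiteness) (by finiteness), ENNReal.toReal_mul]
  simp only [← measureReal_def, ← SetLike.mem_coe, measureReal_occupiedIn_mem hm hind]
  exact bernoulliExp_upperClosure_disjointUnions_le (fun _ => measureReal_nonneg)
    (fun _ => measureReal_le_one) 𝒜 ℬ

theorem measure_someOccupied_congr {Ωs' : Type*} [MeasurableSpace Ωs'] {P' : Measure Ωs'}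
    [IsProbabilityMeasure P'] {o' : E → Set Ωs'} (hm : ∀ e, MeasurableSet (o e))
    (hind : iIndepSet o P) (hm' : ∀ e, MeasurableSet (o' e)) (hind' : iIndepSet o' P')
    (h : ∀ e, P (o e) = P' (o' e)) {𝒜 : Set (Finset E)} (h𝒜 : 𝒜.Countable) :
    P (someOccupied o 𝒜) = P' (someOccupied o' 𝒜) := by
  classical
  rw [measure_someOccupied_eq_iSup h𝒜, measure_someOccupied_eq_iSup h𝒜]
  refine iSup_congr fun A => ?_
  rw [← ENNReal.toReal_eq_toReal_iff' (by finiteness) (by finiteness)]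
  simp only [← measureReal_def, ← SetLike.mem_coe, measureReal_occupiedIn_mem hm hind,
    measureReal_occupiedIn_mem hm' hind']
  simp only [measureReal_def, h]

end Occupied

section Walks

variable {V : Type*} [AddCommGroup V]

/-- The edges of the Cayley graph, as a type. -/
abbrev CayleyEdge (S : Finset V) : Type _ := {e : Sym2 V // IsEdge S e}

variable {S : Finset V}

/-- `w` is a self-avoiding walk from `x` to `y` whose steps lie in `S`. -/
structure IsSelfAvoidingWalk (S : Finset V) {k : ℕ} (w : Fin (k + 1) → V) (x y : V) : Prop where
  injective : Function.Injective w
  head : w 0 = x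
  last : w (Fin.last k) = y
  step (m : Fin k) : w m.succ - w m.castSucc ∈ S

open Classical in
/-- The edges traversed by `w`. Pairs of successive vertices which are not an edge of the Cayley
graph are left out, so that no proof about the steps of `w` is carried along. -/
noncomputable def walkEdges (S : Finset V) {k : ℕ} (w : Fin (k + 1) → V) :
    Finset (CayleyEdge S) :=
  (Finset.univ.image fun m : Fin k => s(w m.castSucc, w m.succ)).subtype (IsEdge S)

/-- The edge sets of the self-avoiding walks from `x` to `y` of length at least `i`. -/
def walkEdgeSets (S : Finset V) (i : ℕ) (x y : V) : Set (Finset (CayleyEdge S)) :=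
  {A | ∃ k, i ≤ k ∧ ∃ w : Fin (k + 1) → V, IsSelfAvoidingWalk S w x y ∧ walkEdges S w = A}

/-- The edge traversed by the step `s` from `x`. -/
def stepEdge (x : V) (s : S) : CayleyEdge S :=
  ⟨s(x, x + s), x, x + s, rfl, by simp⟩

theorem mem_walkEdges {k : ℕ} {w : Fin (k + 1) → V} {e : CayleyEdge S} :
    e ∈ walkEdges S w ↔ ∃ m : Fin k, s(w m.castSucc, w m.succ) = e.1 := by
  simp [walkEdges]

theorem isEdge_of_sub_mem {x y : V} (h : y - x ∈ S) : IsEdge S s(x, y) :=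
  ⟨x, y, rfl, h⟩

theorem IsSelfAvoidingWalk.forall_mem_walkEdges {k : ℕ} {w : Fin (k + 1) → V} {x y : V}
    (hw : IsSelfAvoidingWalk S w x y) {p : Sym2 V → Prop} :
    (∀ e ∈ walkEdges S w, p e) ↔ ∀ m : Fin k, p s(w m.castSucc, w m.succ) := by
  simp only [mem_walkEdges]
  constructor
  · exact fun h m => h ⟨_, isEdge_of_sub_mem (hw.step m)⟩ ⟨m, rfl⟩
  · rintro h e ⟨m, hm⟩
    exact hm ▸ h m

theorem connGE_eq_someOccupied {Ωs : Type*} (occ : Sym2 V → Set Ωs) (i : ℕ) (x y : V) :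
    ConnGE S occ i x y = someOccupied (fun e : CayleyEdge S => occ e) (walkEdgeSets S i x y) := by
  ext ω
  constructor
  · rintro ⟨k, hk, w, hinj, h0, hlast, hstep⟩
    have hw : IsSelfAvoidingWalk S w x y := ⟨hinj, h0, hlast, fun m => (hstep m).1⟩
    exact ⟨_, ⟨k, hk, w, hw, rfl⟩, (hw.forall_mem_walkEdges (p := (ω ∈ occ ·))).2
      fun m => (hstep m).2⟩
  · rintro ⟨_, ⟨k, hk, w, hw, rfl⟩, hω⟩
    exact ⟨k, hk, w, hw.injective, hw.head, hw.last, fun m =>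
      ⟨hw.step m, (hw.forall_mem_walkEdges (p := (ω ∈ occ ·))).1 hω m⟩⟩

theorem finite_setOf_steps_mem (S : Finset V) (k : ℕ) (x : V) :
    {w : Fin (k + 1) → V | w 0 = x ∧ ∀ m : Fin k, w m.succ - w m.castSucc ∈ S}.Finite := by
  induction k generalizing x with
  | zero =>
    refine (Set.finite_singleton fun _ => x).subset fun w hw => funext fun m => ?_
    rw [Fin.fin_one_eq_zero m, hw.1]
  | succ k ih =>
    refine ((S.finite_toSet.biUnion fun s _ => ih (x + s)).image (Fin.cons x)).subset ?_
    rintro w ⟨rfl, hstep⟩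
    refine ⟨Fin.tail w, Set.mem_biUnion (hstep 0) ⟨?_, fun m => hstep m.succ⟩, Fin.cons_self_tail w⟩
    exact (add_sub_cancel _ _).symm

theorem countable_walkEdgeSets (S : Finset V) (i : ℕ) (x y : V) :
    (walkEdgeSets S i x y).Countable := by
  refine (Set.countable_iUnion fun k =>
    ((finite_setOf_steps_mem S k x).image (walkEdges S)).countable).mono ?_
  rintro _ ⟨k, -, w, hw, rfl⟩
  exact Set.mem_iUnion.2 ⟨k, w, ⟨hw.head, hw.step⟩, rfl⟩

theorem IsSelfAvoidingWalk.tail {k : ℕ} {w : Fin (k + 1 + 1) → V} {x y : V}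
    (hw : IsSelfAvoidingWalk S w x y) : IsSelfAvoidingWalk S (Fin.tail w) (w 1) y where
  injective := hw.injective.comp (Fin.succ_injective _)
  head := rfl
  last := hw.last
  step m := hw.step m.succ

theorem walkEdgeSets_succ_subset [DecidableEq V] (i : ℕ) (x y : V) :
    walkEdgeSets S (i + 1) x y ⊆
      ⋃ s : S, disjointUnions {{stepEdge x s}} (walkEdgeSets S i (x + s) y) := by
  rintro _ ⟨k, hk, w, hw, rfl⟩
  obtain ⟨k, rfl⟩ := Nat.exists_eq_succ_of_ne_zero (Nat.ne_zero_of_lt hk)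
  obtain rfl := hw.head
  have hfirst : w 0 + (w 1 - w 0) = w 1 := add_sub_cancel _ _
  refine Set.mem_iUnion.2 ⟨⟨w 1 - w 0, hw.step 0⟩, _, rfl, walkEdges S (Fin.tail w),
    ⟨k, Nat.le_of_succ_le_succ hk, Fin.tail w, hfirst.symm ▸ hw.tail, rfl⟩, ?_, ?_⟩
  · rw [Finset.disjoint_singleton_left, mem_walkEdges]
    rintro ⟨m, hm⟩
    have hmem : w 0 ∈ s(Fin.tail w m.castSucc, Fin.tail w m.succ) := hm ▸ Sym2.mem_mk_left _ _
    rcases Sym2.mem_iff.1 hmem with h | h <;> exact (Fin.succ_ne_zero _ (hw.injective h).symm)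
  · ext e
    simp [mem_walkEdges, Fin.exists_fin_succ, Subtype.ext_iff, stepEdge, Fin.tail, eq_comm]

/-- The `k` steps of the trajectory `v` after time `a`. -/
def trajectorySegment (v : ℕ → V) (a k : ℕ) (m : Fin (k + 1)) : V :=
  v (a + m)

theorem isSelfAvoidingWalk_trajectorySegment {v : ℕ → V} (hv : ∀ i, v (i + 1) - v i ∈ S) {a k : ℕ}
    (hinj : Set.InjOn v (Set.Icc a (a + k))) :
    IsSelfAvoidingWalk S (trajectorySegment v a k) (v a) (v (a + k)) where
  injective m n h := Fin.ext (Nat.add_left_cancel (hinj ⟨by lia, by lia⟩ ⟨by lia, by lia⟩ h))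
  head := rfl
  last := rfl
  step m := hv (a + m)

theorem disjoint_walkEdges_trajectorySegment {v : ℕ → V} {k n : ℕ} (hk : 3 ≤ k) (hn : n ≤ k)
    (hinj : ∀ a, Set.InjOn v (Set.Ico a (a + k))) :
    Disjoint (walkEdges S (trajectorySegment v 0 n))
      (walkEdges S (trajectorySegment v n (k - n))) := by
  refine Finset.disjoint_left.2 fun e he he' => ?_
  obtain ⟨i, hi⟩ := mem_walkEdges.1 he
  obtain ⟨j, hj⟩ := mem_walkEdges.1 he'
  have heq : s(v (0 + i), v (0 + (i + 1))) = s(v (n + j), v (n + (j + 1))) := hi.trans hj.symm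
  rcases Sym2.eq_iff.1 heq with ⟨h, -⟩ | ⟨h, h'⟩
  · have := hinj 0 ⟨by lia, by lia⟩ ⟨by lia, by lia⟩ h
    lia
  · have hij : 0 + (i + 1) = n + j := hinj 0 ⟨by lia, by lia⟩ ⟨by lia, by lia⟩ h'
    have := hinj i ⟨by lia, by lia⟩ ⟨by lia, by lia⟩ h
    lia

theorem injOn_natCast_Ico (k a : ℕ) : Set.InjOn (Nat.cast : ℕ → ZMod k) (Set.Ico a (a + k)) := by
  rintro i ⟨_, _⟩ j ⟨_, _⟩ h
  exact ((ZMod.natCast_eq_natCast_iff _ _ _).1 h).eq_of_abs_lt (abs_lt.2 (by lia))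

theorem cycleGE_subset [DecidableEq V] {Ωs : Type*} (occ : Sym2 V → Set Ωs) {ℓ : ℕ}
    (hℓ : 3 ≤ ℓ) {x : V} (hx : x ≠ 0) :
    CycleGE S occ ℓ x ⊆ ⋃ j ∈ Finset.Ico 1 ℓ, someOccupied (fun e : CayleyEdge S => occ e)
      (disjointUnions (walkEdgeSets S j 0 x) (walkEdgeSets S (ℓ - j) x 0)) := by
  rintro ω ⟨k, hk, w, hw, hw0, ⟨m, rfl⟩, hstep⟩
  have : NeZero k := ⟨by lia⟩
  set n := m.val with hn
  have hnk : n < k := ZMod.val_lt m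
  have hn0 : n ≠ 0 := fun h => hx (by rw [(ZMod.val_eq_zero m).1 h, hw0])
  set v : ℕ → V := fun i => w i with hv
  have hv0 : v 0 = 0 := by simp [hv, hw0]
  have hvk : v (n + (k - n)) = 0 := by simp [hv, hw0, Nat.add_sub_cancel' hnk.le]
  have hvn : v n = w m := by simp [hv, hn]
  have hvstep : ∀ i, v (i + 1) - v i ∈ S := fun i => by simpa [hv] using (hstep i).1
  have hinj : ∀ a, Set.InjOn v (Set.Ico a (a + k)) := fun a =>
    hw.injOn.comp (injOn_natCast_Ico k a) (Set.mapsTo_univ _ _)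
  have hfst : IsSelfAvoidingWalk S (trajectorySegment v 0 n) 0 (w m) := by
    have h := isSelfAvoidingWalk_trajectorySegment (a := 0) (k := n) hvstep
      ((hinj 0).mono (Set.Icc_subset_Ico_right (by lia)))
    rwa [zero_add, hv0, hvn] at h
  have hsnd : IsSelfAvoidingWalk S (trajectorySegment v n (k - n)) (w m) 0 := by
    have h := isSelfAvoidingWalk_trajectorySegment (a := n) (k := k - n) hvstep
      ((hinj n).mono (Set.Icc_subset_Ico_right (by lia)))
    rwa [hvk, hvn] at h
  have hocc : ∀ a b, ∀ e ∈ walkEdges S (trajectorySegment v a b), ω ∈ occ e := by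
    intro a b e he
    obtain ⟨i, hi⟩ := mem_walkEdges.1 he
    rw [← hi]
    simpa [hv, trajectorySegment, add_assoc] using (hstep (a + i : ℕ)).2
  refine Set.mem_biUnion (x := min n (ℓ - 1)) (Finset.mem_coe.2 (Finset.mem_Ico.2 (by lia)))
    ⟨_, ⟨_, ⟨n, by lia, _, hfst, rfl⟩, _, ⟨k - n, by lia, _, hsnd, rfl⟩,
      disjoint_walkEdges_trajectorySegment (hℓ.trans hk) hnk.le hinj, rfl⟩, fun e he => ?_⟩
  exact (Finset.mem_union.1 he).elim (hocc _ _ e) (hocc _ _ e)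

theorem connGE_add_right {Ωs : Type*} (occ : Sym2 V → Set Ωs) (i : ℕ) (x y v : V) :
    ConnGE S occ i (x + v) (y + v) = ConnGE S (fun e => occ (e.map (· + v))) i x y := by
  ext ω
  constructor
  · rintro ⟨k, hk, w, hinj, h0, hlast, hstep⟩
    exact ⟨k, hk, fun m => w m - v, (sub_left_injective).comp hinj, by simp [h0], by simp [hlast],
      fun m => by simpa using hstep m⟩
  · rintro ⟨k, hk, w, hinj, rfl, rfl, hstep⟩
    exact ⟨k, hk, fun m => w m + v, (add_left_injective v).comp hinj, rfl, rfl,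
      fun m => by simpa using hstep m⟩

/-- Translation of edges by `v`. -/
def translateEdge (v : V) (e : CayleyEdge S) : CayleyEdge S :=
  ⟨e.1.map (· + v), by
    obtain ⟨x, y, h, hS⟩ := e.2
    exact ⟨x + v, y + v, by rw [h, Sym2.map_mk], by simpa using hS⟩⟩

theorem translateEdge_injective (v : V) :
    Function.Injective (translateEdge v : CayleyEdge S → CayleyEdge S) :=
  fun _ _ h => Subtype.ext (Sym2.map.injective (add_left_injective v) (congrArg Subtype.val h))

end Walks

section Convolution

variable {V : Type*} [AddCommGroup V]

theorem pconv_comm (f g : V → ℝ≥0∞) : pconv f g = pconv g f := by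
  ext x
  rw [pconv, pconv, ← (Equiv.subLeft x).tsum_eq]
  simp [mul_comm]

theorem pconv_assoc (f g h : V → ℝ≥0∞) : pconv (pconv f g) h = pconv f (pconv g h) := by
  ext x
  simp only [pconv, ← ENNReal.tsum_mul_right, ← ENNReal.tsum_mul_left]
  rw [ENNReal.tsum_comm]
  refine tsum_congr fun y => ?_
  rw [← (Equiv.addRight y).tsum_eq]
  refine tsum_congr fun z => ?_
  simp [mul_assoc, sub_sub, add_comm]

theorem pconv_convIter_left (D f g : V → ℝ≥0∞) (i : ℕ) :
    pconv (convIter D i f) g = convIter D i (pconv f g) := by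
  induction i with
  | zero => rfl
  | succ i ih => rw [convIter, convIter, pconv_assoc, ih]

theorem convIter_convIter (D f : V → ℝ≥0∞) (i j : ℕ) :
    convIter D i (convIter D j f) = convIter D (i + j) f := by
  induction i with
  | zero => rw [zero_add, convIter]
  | succ i ih => rw [Nat.succ_add, convIter, convIter, ih]

theorem pconv_convIter_convIter (D f g : V → ℝ≥0∞) (i j : ℕ) :
    pconv (convIter D i f) (convIter D j g) = convIter D (i + j) (pconv f g) := by
  rw [pconv_convIter_left, pconv_comm, pconv_convIter_left, convIter_convIter, pconv_comm]

theorem pconv_DStep [DecidableEq V] (S : Finset V) (f : V → ℝ≥0∞) (x : V) :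
    pconv (DStep S) f x = ∑ s ∈ S, (S.card : ℝ≥0∞)⁻¹ * f (x - s) := by
  rw [pconv, tsum_eq_sum (s := S) fun y hy => by simp [DStep, hy]]
  exact Finset.sum_congr rfl fun s hs => by simp [DStep, hs]

end Convolution

section Percolation

variable {V Ωs : Type*} [AddCommGroup V] [MeasurableSpace Ωs] {S : Finset V}
  {P : Measure Ωs} {occ : Sym2 V → Set Ωs} {p : ℝ≥0∞}

/-- The two-point function `τ_p(x)`, the probability that `0` is connected to `x`. -/
noncomputable abbrev twoPoint (S : Finset V) (P : Measure Ωs) (occ : Sym2 V → Set Ωs) (x : V) :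
    ℝ≥0∞ :=
  P (Conn S occ 0 x)

variable [IsProbabilityMeasure P]

theorem measure_connGE_add_right (hmeas : ∀ e : CayleyEdge S, MeasurableSet (occ e))
    (hoccP : ∀ e, IsEdge S e → P (occ e) = p)
    (hind : iIndepSet (fun e : CayleyEdge S => occ e) P) (i : ℕ) (x y v : V) :
    P (ConnGE S occ i (x + v) (y + v)) = P (ConnGE S occ i x y) := by
  rw [connGE_add_right, connGE_eq_someOccupied, connGE_eq_someOccupied]
  have hind' : iIndepSet (fun e : CayleyEdge S => occ (translateEdge v e)) P :=
    iIndepSet.precomp (s := fun e : CayleyEdge S => occ e) (translateEdge_injective v) hind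
  exact measure_someOccupied_congr (fun e => hmeas (translateEdge v e)) hind' hmeas hind
    (fun e => (hoccP _ (translateEdge v e).2).trans (hoccP _ e.2).symm)
    (countable_walkEdgeSets S i x y)

theorem measure_connGE_succ_le (hmeas : ∀ e : CayleyEdge S, MeasurableSet (occ e))
    (hind : iIndepSet (fun e : CayleyEdge S => occ e) P) (i : ℕ) (x y : V) :
    P (ConnGE S occ (i + 1) x y) ≤
      ∑ s ∈ S, P (occ s(x, x + s)) * P (ConnGE S occ i (x + s) y) := by
  classical
  rw [← Finset.sum_coe_sort S fun s => P (occ s(x, x + s)) * P (ConnGE S occ i (x + s) y)]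
  simp only [connGE_eq_someOccupied]
  refine (measure_mono (someOccupied_mono (walkEdgeSets_succ_subset i x y))).trans ?_
  rw [someOccupied_iUnion]
  refine (measure_iUnion_fintype_le P _).trans (Finset.sum_le_sum fun s _ => ?_)
  have hBK := measure_someOccupied_disjointUnions_le hmeas hind
    (Set.countable_singleton {stepEdge x s}) (countable_walkEdgeSets S i (x + s) y)
  rwa [someOccupied_singleton_singleton] at hBK

theorem measure_connGE_le [DecidableEq V] (hmeas : ∀ e : CayleyEdge S, MeasurableSet (occ e))
    (hoccP : ∀ e, IsEdge S e → P (occ e) = p)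
    (hind : iIndepSet (fun e : CayleyEdge S => occ e) P) (i : ℕ) (x y : V) :
    P (ConnGE S occ i x y) ≤
      (p * S.card) ^ i * convIter (DStep S) i (twoPoint S P occ) (y - x) := by
  induction i generalizing x with
  | zero =>
    have h := measure_connGE_add_right hmeas hoccP hind 0 0 (y - x) x
    rw [zero_add, sub_add_cancel] at h
    rw [pow_zero, one_mul, h, convIter, twoPoint, Conn]
  | succ i ih =>
    calc P (ConnGE S occ (i + 1) x y)
        ≤ ∑ s ∈ S, P (occ s(x, x + s)) * P (ConnGE S occ i (x + s) y) :=
          measure_connGE_succ_le hmeas hind i x y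
      _ ≤ ∑ s ∈ S, p * ((p * S.card) ^ i *
            convIter (DStep S) i (twoPoint S P occ) (y - x - s)) := by
          refine Finset.sum_le_sum fun s hs => ?_
          rw [hoccP s(x, x + s) (stepEdge x ⟨s, hs⟩).2, sub_sub]
          gcongr
          exact ih (x + s)
      _ = (p * S.card) ^ (i + 1) * ∑ s ∈ S, (S.card : ℝ≥0∞)⁻¹ *
            convIter (DStep S) i (twoPoint S P occ) (y - x - s) := by
          rw [Finset.mul_sum]
          refine Finset.sum_congr rfl fun s hs => ?_
          have hcancel : p * S.card * (S.card : ℝ≥0∞)⁻¹ = p := ENNReal.mul_inv_cancel_right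
            (by simpa using Finset.ne_empty_of_mem hs) (ENNReal.natCast_ne_top _)
          nth_rw 1 [← hcancel]
          ring
      _ = _ := by rw [convIter, pconv_DStep]

theorem tsum_measure_connGE_mul_le [DecidableEq V]
    (hmeas : ∀ e : CayleyEdge S, MeasurableSet (occ e))
    (hoccP : ∀ e, IsEdge S e → P (occ e) = p)
    (hind : iIndepSet (fun e : CayleyEdge S => occ e) P) (i j : ℕ) :
    ∑' x, P (ConnGE S occ i 0 x) * P (ConnGE S occ j x 0) ≤
      (p * S.card) ^ (i + j) *
        convIter (DStep S) (i + j) (pconv (twoPoint S P occ) (twoPoint S P occ)) 0 := by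
  rw [← pconv_convIter_convIter, pconv, ← ENNReal.tsum_mul_left]
  refine ENNReal.tsum_le_tsum fun x => ?_
  rw [pow_add, mul_mul_mul_comm]
  gcongr
  · simpa using measure_connGE_le hmeas hoccP hind i 0 x
  · exact measure_connGE_le hmeas hoccP hind j x 0

theorem measure_cycleGE_le (hmeas : ∀ e : CayleyEdge S, MeasurableSet (occ e))
    (hind : iIndepSet (fun e : CayleyEdge S => occ e) P) {ℓ : ℕ} (hℓ : 3 ≤ ℓ) {x : V}
    (hx : x ≠ 0) :
    P (CycleGE S occ ℓ x) ≤
      ∑ j ∈ Finset.Ico 1 ℓ, P (ConnGE S occ j 0 x) * P (ConnGE S occ (ℓ - j) x 0) := by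
  classical
  refine (measure_mono (cycleGE_subset occ hℓ hx)).trans
    ((measure_biUnion_finset_le _ _).trans (Finset.sum_le_sum fun j _ => ?_))
  rw [connGE_eq_someOccupied, connGE_eq_someOccupied]
  exact measure_someOccupied_disjointUnions_le hmeas hind (countable_walkEdgeSets S j 0 x)
    (countable_walkEdgeSets S (ℓ - j) x 0)

end Percolation

theorem sum_cycle_prob_le_general {V Ωs : Type*} [AddCommGroup V] [DecidableEq V]
    [MeasurableSpace Ωs] (S : Finset V) (P : Measure Ωs) [IsProbabilityMeasure P]
    (occ : Sym2 V → Set Ωs) (hmeas : ∀ e : CayleyEdge S, MeasurableSet (occ e)) (p : ℝ≥0∞)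
    (hoccP : ∀ e, IsEdge S e → P (occ e) = p)
    (hind : iIndepSet (fun e : CayleyEdge S => occ e) P) (ℓ : ℕ) (hℓ : 3 ≤ ℓ) :
    ∑' x : {x : V // x ≠ 0}, P (CycleGE S occ ℓ (x : V)) ≤
      ((ℓ : ℝ≥0∞) - 1) * ((p * S.card) ^ ℓ *
        convIter (DStep S) ℓ (pconv (twoPoint S P occ) (twoPoint S P occ)) 0) := by
  set B := (p * S.card) ^ ℓ *
    convIter (DStep S) ℓ (pconv (twoPoint S P occ) (twoPoint S P occ)) 0
  calc ∑' x : {x : V // x ≠ 0}, P (CycleGE S occ ℓ x)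
      ≤ ∑' x : {x : V // x ≠ 0}, ∑ j ∈ Finset.Ico 1 ℓ,
          P (ConnGE S occ j 0 x) * P (ConnGE S occ (ℓ - j) x 0) :=
        ENNReal.tsum_le_tsum fun x => measure_cycleGE_le hmeas hind hℓ x.2
    _ ≤ ∑' x, ∑ j ∈ Finset.Ico 1 ℓ, P (ConnGE S occ j 0 x) * P (ConnGE S occ (ℓ - j) x 0) :=
        ENNReal.tsum_comp_le_tsum_of_injective Subtype.val_injective _
    _ = ∑ j ∈ Finset.Ico 1 ℓ, ∑' x, P (ConnGE S occ j 0 x) * P (ConnGE S occ (ℓ - j) x 0) :=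
        Summable.tsum_finsetSum fun _ _ => ENNReal.summable
    _ ≤ ∑ _j ∈ Finset.Ico 1 ℓ, B := by
        refine Finset.sum_le_sum fun j hj => ?_
        have h := tsum_measure_connGE_mul_le hmeas hoccP hind j (ℓ - j)
        rwa [Nat.add_sub_cancel' (Finset.mem_Ico.1 hj).2.le] at h
    _ = ((ℓ : ℝ≥0∞) - 1) * B := by simp

/-- Suppose `p ≤ p̄_c` with `Ω p̄_c ≤ 2` and `T_p^{(ℓ,2)} ≤ K_{ℓ,2} Ω^{-ℓ/2}`, where
`T_p^{(ℓ,2)}` bounds `(D^{*ℓ} * τ_p^{*2})(0)` (this uses `τ̂_p ≥ 0`).  Then for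
`ℓ ≥ 4`, `∑_{x ≠ 0} Π^{(0,ℓ)}_p(x) ≤ (ℓ-1) 2^ℓ K_{ℓ,2} Ω^{-ℓ/2}`, where
`Π^{(0,ℓ)}_p(x)` is the probability of an occupied cycle of length `≥ ℓ` through
`0` and `x`. -/
theorem sum_cycle_prob_le {V Ωs : Type*} [AddCommGroup V] [DecidableEq V]
    [MeasurableSpace Ωs]
    (S : Finset V) (h0S : (0 : V) ∉ S) (hSymm : ∀ v ∈ S, -v ∈ S)
    (P : Measure Ωs) [IsProbabilityMeasure P]
    (occ : Sym2 V → Set Ωs) (hmeas : ∀ e, MeasurableSet (occ e))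
    (p pbar : ℝ≥0∞) (hp : p ≤ pbar) (hpbar : pbar * S.card ≤ 2)
    (hoccP : ∀ e, IsEdge S e → P (occ e) = p)
    (hind : iIndepSet (fun e : {e : Sym2 V // IsEdge S e} => occ (e : Sym2 V)) P)
    (ℓ : ℕ) (hℓ : 4 ≤ ℓ) (Tl2 Kl2 : ℝ≥0∞)
    (hT : convIter (DStep S) ℓ
        (pconv (fun y => P (Conn S occ 0 y)) (fun y => P (Conn S occ 0 y))) 0 ≤ Tl2)
    (hK : Tl2 ≤ Kl2 * (S.card : ℝ≥0∞) ^ (-(ℓ : ℝ) / 2)) :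
    ∑' x : {x : V // x ≠ 0}, P (CycleGE S occ ℓ (x : V)) ≤
      ((ℓ : ℝ≥0∞) - 1) * 2 ^ ℓ * Kl2 * (S.card : ℝ≥0∞) ^ (-(ℓ : ℝ) / 2) := by
  have hpS : p * S.card ≤ 2 := by grw [hp, hpbar]
  grw [sum_cycle_prob_le_general S P occ (fun e => hmeas e) p hoccP hind ℓ (by lia), hpS, hT, hK]
  simp only [mul_assoc, le_refl]
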